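/- Let k be a field, G a bipartite graph on X ⊔ Y with edge ideal I ⊆ k[X ⊔ Y], and J the associated Ferrers ideal. Then β_{i,X',•}(I) = β_{i,X',•}(J) holds for all subsets X' ⊆ X and all i ≥ 0 if and only if G is nearly row-nested. -/

import Mathlib

open Finset

/-- An abstract simplicial complex on the vertex type `V`: a collection of
finite subsets of `V` (the *faces*) closed under taking subsets. -/
structure SimpComplex (V : Type*) where
  faces : Set (Finset V)
  down_closed : ∀ F ∈ faces, ∀ G ⊆ F, G ∈ faces

namespace SimpComplex

variable {V : Type*}

/-- The induced subcomplex `Γ[W]` of `Γ` on a set `W` of vertices. -/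
def induced (K : SimpComplex V) (W : Finset V) : SimpComplex V where
  faces := {F | F ∈ K.faces ∧ F ⊆ W}
  down_closed := fun F hF G hG => ⟨K.down_closed F hF.1 G hG, hG.trans hF.2⟩

/-- A simplicial complex is a cone with apex `v` if `v` belongs to every
maximal face. -/
def IsConeWithApex (K : SimpComplex V) (v : V) : Prop :=
  ∀ F ∈ K.faces, (∀ G ∈ K.faces, F ⊆ G → G = F) → v ∈ F

variable [LinearOrder V] [Fintype V] (k : Type*) [Field k]

/-- The faces of cardinality `c` of a simplicial complex, as a type. -/
def Face (K : SimpComplex V) (c : ℕ) : Type _ :=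
  {F : Finset V // F ∈ K.faces ∧ F.card = c}

/-- The space of simplicial chains with coefficients in `k` in (reduced)
homological degree `c - 1`; it has a basis indexed by the faces of
cardinality `c`. -/
abbrev Chains (K : SimpComplex V) (c : ℕ) : Type _ := Face K c → k

/-- The simplicial boundary map, from chains on faces of cardinality `c + 1`
to chains on faces of cardinality `c`, expressed in coordinates:  the
coefficient of a face `G` in `∂ x` is a signed sum of the coefficients of
`x` at the faces `G ∪ {v}`, with the usual signs determined by the linear
order on the vertices. -/
noncomputable def boundary (K : SimpComplex V) (c : ℕ) :
    Chains k K (c + 1) →ₗ[k] Chains k K c where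
  toFun x G := ∑ v ∈ (Finset.univ \ G.1).attach,
    letI := Classical.dec (insert v.1 G.1 ∈ K.faces)
    if h : insert v.1 G.1 ∈ K.faces then
      ((-1 : k) ^ (G.1.filter (fun w => w < v.1)).card) *
        x ⟨insert v.1 G.1, h, by
          have hv : v.1 ∉ G.1 := (Finset.mem_sdiff.mp v.2).2
          rw [Finset.card_insert_of_notMem hv, G.2.2]⟩
    else 0
  map_add' x y := by
    funext G
    simp only [Pi.add_apply]
    rw [← Finset.sum_add_distrib]
    refine Finset.sum_congr rfl fun v _ => ?_
    split
    · exact mul_add _ (x _) (y _)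
    · simp
  map_smul' a x := by
    funext G
    simp only [Pi.smul_apply, RingHom.id_apply, smul_eq_mul, Finset.mul_sum]
    refine Finset.sum_congr rfl fun v _ => ?_
    split
    · exact mul_left_comm _ a (x _)
    · simp

/-- The `j`-th reduced simplicial homology `H̃_j(K; k)` (for `j : ℕ`):
cycles supported on faces of cardinality `j + 1` modulo boundaries of chains on
faces of cardinality `j + 2`.  (Note that the empty set is a face of every
nonvoid complex, so this is reduced homology.) -/
@[reducible] noncomputable def reducedHomology (K : SimpComplex V) (j : ℕ) : Type _ :=
  LinearMap.ker (boundary k K j) ⧸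
    Submodule.comap (LinearMap.ker (boundary k K j)).subtype
      (LinearMap.range (boundary k K (j + 1)))

/-- The `j`-th reduced Betti number `β̃_j(K) = dim_k H̃_j(K; k)`. -/
noncomputable def reducedBetti (K : SimpComplex V) (j : ℕ) : ℕ :=
  Module.finrank k (reducedHomology k K j)

/-- Hochster's formula, used as the definition of the fine graded Betti numbers
(graded by squarefree multidegrees, i.e. by subsets `W` of the variables) of
the squarefree monomial ideal `I_K` whose Stanley–Reisner complex is `K`:
`β_{i,W}(I_K) = dim_k H̃_{|W| - i - 2}(K[W]; k)`. -/
noncomputable def bettiFine (K : SimpComplex V) (i : ℕ) (W : Finset V) : ℕ :=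
  if i + 2 ≤ W.card then reducedBetti k (K.induced W) (W.card - i - 2) else 0

/-- The total (ungraded) Betti number `β_i`, the sum of all the fine graded
Betti numbers. -/
noncomputable def totalBetti (K : SimpComplex V) (i : ℕ) : ℕ :=
  ∑ W : Finset V, bettiFine k K i W

end SimpComplex

open SimpComplex

/-- The vertex `x_i` of `X = {x_1, …, x_n}` inside `X ⊔ Y = Fin (n + m)`. -/
def xVert {n m : ℕ} (i : Fin n) : Fin (n + m) := Fin.castAdd m i

/-- The vertex `y_j` of `Y = {y_1, …, y_m}` inside `X ⊔ Y = Fin (n + m)`. -/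
def yVert {n m : ℕ} (j : Fin m) : Fin (n + m) := Fin.natAdd n j

/-- A bipartite graph `G` on `X ⊔ Y` is given by its edge set `E ⊆ X × Y`.
`nbr E i` is the neighborhood `N(x_i) ⊆ Y` of the vertex `x_i` in `G`. -/
def nbr {n m : ℕ} (E : Finset (Fin n × Fin m)) (i : Fin n) : Finset (Fin m) :=
  Finset.univ.filter fun j => (i, j) ∈ E

/-- The degree `deg_G x_i = |N(x_i)|`. -/
def degG {n m : ℕ} (E : Finset (Fin n × Fin m)) (i : Fin n) : ℕ := (nbr E i).card

/-- The Ferrers graph `H` associated to the bipartite graph `E`: the vertex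
`x_i` is joined to exactly `y_1, …, y_{deg_G x_i}`. -/
def ferrers {n m : ℕ} (E : Finset (Fin n × Fin m)) : Finset (Fin n × Fin m) :=
  Finset.univ.filter fun p => (p.2 : ℕ) < degG E p.1

/-- The independence complex of the bipartite graph `E` (faces are the subsets
of `X ⊔ Y` containing no edge), i.e. the Stanley–Reisner complex `Δ(I)` of the
edge ideal `I` of `E`. -/
def indepComplex {n m : ℕ} (E : Finset (Fin n × Fin m)) : SimpComplex (Fin (n + m)) where
  faces := {F | ∀ p ∈ E, ¬(xVert p.1 ∈ F ∧ yVert p.2 ∈ F)}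
  down_closed := fun _ hF _ hG p hp hc => hF p hp ⟨hG hc.1, hG hc.2⟩

/-- The subset `X' ⊔ Y'` of the vertex set `X ⊔ Y = Fin (n + m)`. -/
def vset {n m : ℕ} (X' : Finset (Fin n)) (Y' : Finset (Fin m)) : Finset (Fin (n + m)) :=
  X'.image xVert ∪ Y'.image yVert

/-- The `ℤ^n`-graded Betti number `β_{i,X',•}(I)` of the edge ideal `I` of the
bipartite graph `E`, in the grading with `deg x_i = e_i` and `deg y_j = 0`:
it is the sum of the fine graded Betti numbers `β_{i, X' ⊔ Y'}(I)` over all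
`Y' ⊆ Y`. -/
noncomputable def bettiCoarse (k : Type*) [Field k] {n m : ℕ}
    (E : Finset (Fin n × Fin m)) (i : ℕ) (X' : Finset (Fin n)) : ℕ :=
  ∑ Y' : Finset (Fin m), bettiFine k (indepComplex E) i (vset X' Y')

/-- The binomial coefficient `C(a, b)` with an integer lower argument, which is
zero when `b < 0`. -/
def chooseInt (a : ℕ) (b : ℤ) : ℕ := if 0 ≤ b then a.choose b.toNat else 0

/-- `G` is *nearly row-nested*: whenever `|N(x₁)| < |N(x₂)|` one has
`N(x₁) ⊂ N(x₂)`, and for every occurring value `c` of `|N(x)|`, the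
intersection of all the neighborhoods of cardinality `c` has at least
`c - 1` elements. -/
def NearlyRowNested {n m : ℕ} (E : Finset (Fin n × Fin m)) : Prop :=
  (∀ x1 x2 : Fin n, (nbr E x1).card < (nbr E x2).card → nbr E x1 ⊂ nbr E x2) ∧
    ∀ c : ℕ, (∃ x : Fin n, (nbr E x).card = c) →
      c - 1 ≤ (Finset.univ.filter fun j : Fin m =>
        ∀ x : Fin n, (nbr E x).card = c → j ∈ nbr E x).card

namespace SimpComplex

section Algebra

variable {V : Type*} [LinearOrder V] (k : Type*) [Field k]

/-- The sign `(-1)^{#{w ∈ F : w < v}}`. -/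
def sign (v : V) (F : Finset V) : k := (-1) ^ (F.filter (· < v)).card

/-- Contraction by the vertex `v` on functions on finite vertex sets. -/
def contract (v : V) : (Finset V → k) →ₗ[k] (Finset V → k) where
  toFun x F := if v ∈ F then 0 else sign k v F * x (insert v F)
  map_add' x y := by
    funext F
    simp only [Pi.add_apply]
    split <;> ring
  map_smul' a x := by
    funext F
    simp only [Pi.smul_apply, smul_eq_mul, RingHom.id_apply]
    split <;> ring

/-- Exterior multiplication by the vertex `v` on functions on finite vertex sets. -/
def wedge (v : V) : (Finset V → k) →ₗ[k] (Finset V → k) where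
  toFun x F := if v ∈ F then sign k v F * x (F.erase v) else 0
  map_add' x y := by
    funext F
    simp only [Pi.add_apply]
    split <;> ring
  map_smul' a x := by
    funext F
    simp only [Pi.smul_apply, smul_eq_mul, RingHom.id_apply]
    split <;> ring

variable {k}

lemma contract_apply (v : V) (x : Finset V → k) (F : Finset V) :
    contract k v x F = if v ∈ F then 0 else sign k v F * x (insert v F) := rfl

lemma wedge_apply (v : V) (x : Finset V → k) (F : Finset V) :
    wedge k v x F = if v ∈ F then sign k v F * x (F.erase v) else 0 := rfl

lemma sign_mul_self (v : V) (F : Finset V) : sign k v F * sign k v F = 1 := by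
  simp [sign, ← mul_pow]

lemma sign_insert_self (v : V) (F : Finset V) : sign k v (insert v F) = sign k v F := by
  simp [sign, Finset.filter_insert]

lemma sign_erase_self (v : V) (F : Finset V) : sign k v (F.erase v) = sign k v F := by
  by_cases h : v ∈ F
  · rw [← sign_insert_self, Finset.insert_erase h]
  · rw [Finset.erase_eq_of_notMem h]

lemma sign_insert_of_lt {v w : V} {F : Finset V} (hw : w ∉ F) (h : w < v) :
    sign k v (insert w F) = -sign k v F := by
  rw [sign, sign, Finset.filter_insert, if_pos h, Finset.card_insert_of_notMem (by simp [hw]),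
    pow_succ]
  ring

lemma sign_insert_of_gt {v w : V} {F : Finset V} (h : v < w) :
    sign k v (insert w F) = sign k v F := by
  rw [sign, sign, Finset.filter_insert, if_neg h.not_gt]

/-- Exchanging the order in which two distinct vertices are inserted reverses the sign. -/
lemma sign_insert_comm {v w : V} {F : Finset V} (hvw : v ≠ w) (hv : v ∉ F) (hw : w ∉ F) :
    sign k v F * sign k w (insert v F) = -(sign k w F * sign k v (insert w F)) := by
  rcases lt_or_gt_of_ne hvw with h | h
  · rw [sign_insert_of_lt hv h, sign_insert_of_gt h]
    ring
  · rw [sign_insert_of_gt h, sign_insert_of_lt hw h]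
    ring

lemma contract_contract_self (v : V) (x : Finset V → k) : contract k v (contract k v x) = 0 := by
  funext F
  simp [contract_apply]

lemma contract_anticomm {v w : V} (hvw : v ≠ w) (x : Finset V → k) :
    contract k v (contract k w x) = -contract k w (contract k v x) := by
  funext F
  simp only [contract_apply, Pi.neg_apply, Finset.mem_insert, hvw, hvw.symm, false_or]
  by_cases hv : v ∈ F
  · simp [hv]
  by_cases hw : w ∈ F
  · simp [hw]
  simp only [hv, hw, if_false, ← mul_assoc]
  rw [sign_insert_comm hvw hv hw, Finset.insert_comm]
  ring

lemma contract_wedge_anticomm {v w : V} (hvw : v ≠ w) (x : Finset V → k) :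
    contract k v (wedge k w x) = -wedge k w (contract k v x) := by
  funext F
  simp only [contract_apply, wedge_apply, Pi.neg_apply, Finset.mem_insert, Finset.mem_erase, hvw,
    hvw.symm, false_or, ne_eq, not_false_eq_true, true_and]
  by_cases hv : v ∈ F
  · simp [hv]
  by_cases hw : w ∈ F
  · obtain ⟨G, hwG, rfl⟩ : ∃ G, w ∉ G ∧ insert w G = F :=
      ⟨F.erase w, Finset.notMem_erase w F, Finset.insert_erase hw⟩
    have hvG : v ∉ G := fun h => hv (Finset.mem_insert_of_mem h)
    simp only [hv, hw, if_true, if_false, ← mul_assoc]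
    rw [Finset.erase_insert hwG, Finset.insert_comm, Finset.erase_insert (by simp [hwG, hvw.symm]),
      sign_insert_self, ← neg_mul]
    congr 1
    rcases lt_or_gt_of_ne hvw with h' | h'
    · rw [sign_insert_self, sign_insert_of_lt hvG h', sign_insert_of_gt h']
      ring
    · rw [sign_insert_self, sign_insert_of_gt h', sign_insert_of_lt hwG h']
      ring
  · simp [hw]

lemma contract_wedge_add_wedge_contract (v : V) (x : Finset V → k) :
    contract k v (wedge k v x) + wedge k v (contract k v x) = x := by
  funext F
  simp only [contract_apply, wedge_apply, Pi.add_apply]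
  by_cases hv : v ∈ F
  · simp [hv, sign_erase_self, ← mul_assoc, sign_mul_self]
  · simp [hv, sign_insert_self, ← mul_assoc, sign_mul_self]

variable [Fintype V]

variable (k V) in
/-- The boundary operator on all functions on finite vertex sets. -/
def fullBoundary : (Finset V → k) →ₗ[k] (Finset V → k) := ∑ v, contract k v

local notation "∂" => fullBoundary V k

lemma fullBoundary_eq_sum (x : Finset V → k) : ∂ x = ∑ v, contract k v x := by
  simp [fullBoundary, LinearMap.sum_apply]

lemma fullBoundary_contract (b : V) (x : Finset V → k) :
    ∂ (contract k b x) = -contract k b (∂ x) := by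
  rw [fullBoundary_eq_sum, fullBoundary_eq_sum, map_sum, ← Finset.sum_neg_distrib]
  refine Finset.sum_congr rfl fun v _ => ?_
  by_cases h : v = b
  · subst h
    simp [contract_contract_self]
  · exact contract_anticomm h x

lemma fullBoundary_wedge (b : V) (x : Finset V → k) :
    ∂ (wedge k b x) = x - wedge k b (∂ x) := by
  rw [fullBoundary_eq_sum, fullBoundary_eq_sum, map_sum,
    ← Finset.add_sum_erase _ _ (Finset.mem_univ b),
    ← Finset.add_sum_erase (f := fun v => wedge k b (contract k v x)) _ (Finset.mem_univ b),
    Finset.sum_congr rfl (fun v hv => contract_wedge_anticomm (Finset.ne_of_mem_erase hv) x),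
    Finset.sum_neg_distrib]
  nth_rewrite 3 [← contract_wedge_add_wedge_contract b x]
  abel

lemma fullBoundary_fullBoundary (x : Finset V → k) : ∂ (∂ x) = 0 := by
  simp only [fullBoundary_eq_sum, map_sum]
  rw [← Finset.sum_product']
  refine Finset.sum_involution (fun p _ => (p.2, p.1)) ?_ ?_ (by simp) (by simp)
  · rintro ⟨v, w⟩ -
    by_cases h : v = w
    · subst h
      simp [contract_contract_self]
    · simp [contract_anticomm h]
  · rintro ⟨v, w⟩ - h
    contrapose! h
    obtain rfl : w = v := congrArg Prod.fst h
    exact contract_contract_self _ x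

end Algebra

section Homology

variable {V : Type*} {k : Type*} [Field k]

variable (k) in
/-- The functions supported on the members of `K` of cardinality `c`. -/
def chainSpace (K : Set (Finset V)) (c : ℤ) : Submodule k (Finset V → k) where
  carrier := {x | ∀ F, x F ≠ 0 → F ∈ K ∧ (F.card : ℤ) = c}
  add_mem' := by
    intro x y hx hy F hF
    by_cases h : x F = 0
    · exact hy F (by simpa [h] using hF)
    · exact hx F h
  zero_mem' := by simp
  smul_mem' := by
    intro a x hx F hF
    exact hx F (by rintro h; simp [h] at hF)

lemma chainSpace_mono {K L : Set (Finset V)} (h : K ⊆ L) (c : ℤ) :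
    chainSpace k K c ≤ chainSpace k L c :=
  fun _ hx F hF => ⟨h (hx F hF).1, (hx F hF).2⟩

variable [LinearOrder V]

lemma wedge_mem_chainSpace {K L : Set (Finset V)} {b : V} (h : ∀ F ∈ L, insert b F ∈ K) {c : ℤ}
    {x : Finset V → k} (hx : x ∈ chainSpace k L c) : wedge k b x ∈ chainSpace k K (c + 1) := by
  intro F hF
  rw [wedge_apply] at hF
  split_ifs at hF with hb
  · have := hx _ (right_ne_zero_of_mul hF)
    refine ⟨by simpa [Finset.insert_erase hb] using h _ this.1, ?_⟩
    rw [← this.2, Finset.card_erase_of_mem hb]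
    have := Finset.card_pos.2 ⟨b, hb⟩
    omega
  · exact absurd rfl hF

lemma contract_mem_chainSpace {K L : Set (Finset V)} {b : V}
    (h : ∀ F, b ∉ F → insert b F ∈ K → F ∈ L) {c : ℤ}
    {x : Finset V → k} (hx : x ∈ chainSpace k K (c + 1)) : contract k b x ∈ chainSpace k L c := by
  intro F hF
  rw [contract_apply] at hF
  split_ifs at hF with hb
  · exact absurd rfl hF
  · have := hx _ (right_ne_zero_of_mul hF)
    refine ⟨h F hb this.1, ?_⟩
    have h2 := this.2
    rw [Finset.card_insert_of_notMem hb] at h2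
    push_cast at h2
    omega

/-- The members of `K` avoiding `b`. -/
def deletion (K : Set (Finset V)) (b : V) : Set (Finset V) := {F | b ∉ F ∧ F ∈ K}

/-- The link of `b` in `K`. -/
def link (K : Set (Finset V)) (b : V) : Set (Finset V) := {F | b ∉ F ∧ insert b F ∈ K}

lemma mem_chainSpace_deletion {K : Set (Finset V)} {b : V} {c : ℤ} {x : Finset V → k} :
    x ∈ chainSpace k (deletion K b) c ↔ x ∈ chainSpace k K c ∧ contract k b x = 0 := by
  constructor
  · refine fun hx => ⟨chainSpace_mono (fun F hF => hF.2) c hx, ?_⟩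
    funext F
    rw [contract_apply]
    split_ifs with hb
    · rfl
    · by_contra h
      exact (hx _ (right_ne_zero_of_mul h)).1.1 (Finset.mem_insert_self b F)
  · rintro ⟨hx, h0⟩ F hF
    refine ⟨⟨fun hb => hF ?_, (hx F hF).1⟩, (hx F hF).2⟩
    have := congrFun h0 (F.erase b)
    simpa [contract_apply, Finset.insert_erase hb, sign] using this

lemma contract_mem_link {K : Set (Finset V)} {b : V} {c : ℤ} {x : Finset V → k}
    (hx : x ∈ chainSpace k K (c + 1)) : contract k b x ∈ chainSpace k (link K b) c :=
  contract_mem_chainSpace (L := link K b) (fun _ h1 h2 => ⟨h1, h2⟩) hx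

lemma contract_wedge_of_mem_link {K : Set (Finset V)} {b : V} {c : ℤ} {u : Finset V → k}
    (hu : u ∈ chainSpace k (link K b) c) : contract k b (wedge k b u) = u := by
  have h0 : contract k b u = 0 :=
    (mem_chainSpace_deletion.1
      (chainSpace_mono (L := deletion Set.univ b) (fun F hF => ⟨hF.1, trivial⟩) c hu)).2
  have := contract_wedge_add_wedge_contract b u
  rwa [h0, map_zero, add_zero] at this

variable [Fintype V]

local notation "∂" => fullBoundary V k

variable (k) in
/-- The cycles of `K` supported in cardinality `c`. -/
def cycleSpace (K : Set (Finset V)) (c : ℤ) : Submodule k (Finset V → k) :=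
  chainSpace k K c ⊓ LinearMap.ker ∂

variable (k) in
/-- The boundaries of `K` supported in cardinality `c`. -/
def boundarySpace (K : Set (Finset V)) (c : ℤ) : Submodule k (Finset V → k) :=
  (chainSpace k K (c + 1)).map ∂

variable (k) in
/-- The dimension of the reduced homology of `K` in homological degree `c - 1`. -/
noncomputable def homologyDim (K : Set (Finset V)) (c : ℤ) : ℕ :=
  Module.finrank k (cycleSpace k K c ⧸ (boundarySpace k K c).comap (cycleSpace k K c).subtype)

lemma finrank_quotient_comap_eq {M₁ M₂ : Type*} [AddCommGroup M₁] [Module k M₁] [AddCommGroup M₂]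
    [Module k M₂] (f : M₁ →ₗ[k] M₂) {Z₁ B₁ : Submodule k M₁} {Z₂ B₂ : Submodule k M₂}
    (hZ : ∀ x ∈ Z₁, f x ∈ Z₂) (hB : ∀ x ∈ Z₁, (f x ∈ B₂ ↔ x ∈ B₁))
    (hs : ∀ z ∈ Z₂, ∃ x ∈ Z₁, z - f x ∈ B₂) :
    Module.finrank k (Z₁ ⧸ B₁.comap Z₁.subtype) = Module.finrank k (Z₂ ⧸ B₂.comap Z₂.subtype) := by
  let g : Z₁ →ₗ[k] Z₂ ⧸ B₂.comap Z₂.subtype := (Submodule.mkQ _).comp (f.restrict hZ)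
  have hker : LinearMap.ker g = B₁.comap Z₁.subtype := by
    ext x
    rw [LinearMap.mem_ker]
    simp only [g, LinearMap.comp_apply, Submodule.mkQ_apply, Submodule.Quotient.mk_eq_zero,
      Submodule.mem_comap, Submodule.subtype_apply, LinearMap.coe_restrict_apply]
    exact hB x x.2
  have hsurj : Function.Surjective g := by
    intro q
    obtain ⟨z, rfl⟩ := Submodule.mkQ_surjective _ q
    obtain ⟨x, hx, hzx⟩ := hs z z.2
    refine ⟨⟨x, hx⟩, ?_⟩
    simp only [g, LinearMap.comp_apply, Submodule.mkQ_apply]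
    refine ((Submodule.Quotient.eq _).2 ?_).symm
    simpa using hzx
  rw [← hker]
  exact (LinearMap.quotKerEquivOfSurjective g hsurj).finrank_eq

lemma homologyDim_eq_zero {K : Set (Finset V)} {c : ℤ}
    (h : cycleSpace k K c ≤ boundarySpace k K c) : homologyDim k K c = 0 := by
  have : (boundarySpace k K c).comap (cycleSpace k K c).subtype = ⊤ := by
    rw [Submodule.comap_subtype_eq_top]
    exact h
  rw [homologyDim, this]
  exact Module.finrank_zero_of_subsingleton

lemma boundarySpace_mono {K L : Set (Finset V)} (h : K ⊆ L) (c : ℤ) :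
    boundarySpace k K c ≤ boundarySpace k L c :=
  Submodule.map_mono (chainSpace_mono h _)

/-- A complex that is a cone has no reduced homology. -/
lemma cycleSpace_le_boundarySpace_of_cone {K : Set (Finset V)} (b : V)
    (h : ∀ F ∈ K, insert b F ∈ K) (c : ℤ) : cycleSpace k K c ≤ boundarySpace k K c := by
  rintro x ⟨hx, hx0⟩
  refine ⟨wedge k b x, wedge_mem_chainSpace h hx, ?_⟩
  rw [fullBoundary_wedge, LinearMap.mem_ker.1 hx0, map_zero, sub_zero]

/-- A boundary in the link of `b` can be cancelled by adding a boundary of `K`. -/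
lemma add_boundary_wedge_mem_deletion {K : Set (Finset V)} {b : V} {c : ℤ} {x u : Finset V → k}
    (hx : x ∈ chainSpace k K (c + 1)) (hu : u ∈ chainSpace k (link K b) (c + 1))
    (hK : ∀ F ∈ K, ∀ G ⊆ F, G ∈ K) (hxu : contract k b x = ∂ u) :
    x + ∂ (wedge k b u) ∈ chainSpace k (deletion K b) (c + 1) := by
  rw [mem_chainSpace_deletion]
  constructor
  · refine add_mem hx ?_
    rw [fullBoundary_wedge, ← hxu]
    refine sub_mem (chainSpace_mono (fun F hF => hK _ hF.2 _ (Finset.subset_insert b F)) _ hu)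
      (wedge_mem_chainSpace (L := link K b) (fun F hF => hF.2)
        (contract_mem_link hx))
  · have h1 := fullBoundary_contract b (wedge k b u)
    rw [contract_wedge_of_mem_link hu] at h1
    rw [map_add, hxu, h1, neg_add_cancel]

/-- Deleting a vertex with acyclic link preserves homology. -/
lemma homologyDim_deletion {K : Set (Finset V)} (hK : ∀ F ∈ K, ∀ G ⊆ F, G ∈ K) (b : V)
    (hL : ∀ c, cycleSpace k (link K b) c ≤ boundarySpace k (link K b) c) (c : ℤ) :
    homologyDim k (deletion K b) c = homologyDim k K c := by
  have hDK : deletion K b ⊆ K := fun F hF => hF.2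
  have key : ∀ (c : ℤ) (y : Finset V → k), y ∈ chainSpace k K (c + 1) →
      contract k b (∂ y) = 0 → ∃ u, ∃ _ : u ∈ chainSpace k (link K b) (c + 1),
        y + ∂ (wedge k b u) ∈ chainSpace k (deletion K b) (c + 1) ∧
        wedge k b u ∈ chainSpace k K (c + 1 + 1) := by
    intro c y hy h0
    obtain ⟨u, hu, hyu⟩ := hL c ⟨contract_mem_link hy, by
      rw [SetLike.mem_coe, LinearMap.mem_ker, fullBoundary_contract, h0, neg_zero]⟩
    exact ⟨u, hu, add_boundary_wedge_mem_deletion hy hu hK hyu.symm,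
      wedge_mem_chainSpace (fun F hF => hF.2) hu⟩
  refine finrank_quotient_comap_eq LinearMap.id ?_ ?_ ?_
  · exact fun x hx => ⟨chainSpace_mono hDK c hx.1, hx.2⟩
  · refine fun x hx => ⟨?_, fun h => boundarySpace_mono hDK c h⟩
    rintro ⟨y, hy, hyx⟩
    obtain ⟨u, -, hu, -⟩ := key c y hy (by
      rw [hyx]
      exact (mem_chainSpace_deletion.1 hx.1).2)
    refine ⟨_, hu, ?_⟩
    rw [map_add, fullBoundary_fullBoundary, add_zero]
    exact hyx
  · rintro z ⟨hz, hz0⟩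
    obtain ⟨c, rfl⟩ : ∃ c' : ℤ, c = c' + 1 := ⟨c - 1, by ring⟩
    obtain ⟨u, -, hu, hu'⟩ := key c z hz (by rw [LinearMap.mem_ker.1 hz0, map_zero])
    refine ⟨_, ⟨hu, ?_⟩, -wedge k b u, neg_mem hu', ?_⟩
    · rw [SetLike.mem_coe, LinearMap.mem_ker, map_add, fullBoundary_fullBoundary, LinearMap.mem_ker.1 hz0, add_zero]
    · simp

/-- If the deletion of `b` is acyclic, the homology of `K` is the shifted homology of the link. -/
lemma homologyDim_link {K : Set (Finset V)} (hK : ∀ F ∈ K, ∀ G ⊆ F, G ∈ K) (b : V)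
    (hD : ∀ c, cycleSpace k (deletion K b) c ≤ boundarySpace k (deletion K b) c) (c : ℤ) :
    homologyDim k K (c + 1) = homologyDim k (link K b) c := by
  have hDK : deletion K b ⊆ K := fun F hF => hF.2
  have hLD : link K b ⊆ deletion K b :=
    fun F hF => ⟨hF.1, hK _ hF.2 _ (Finset.subset_insert b F)⟩
  refine finrank_quotient_comap_eq (contract k b) ?_ ?_ ?_
  · rintro x ⟨hx, hx0⟩
    refine ⟨contract_mem_link hx, ?_⟩
    rw [SetLike.mem_coe, LinearMap.mem_ker, fullBoundary_contract, LinearMap.mem_ker.1 hx0, map_zero, neg_zero]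
  · rintro x ⟨hx, hx0⟩
    constructor
    · rintro ⟨u, hu, hxu⟩
      have h1 := add_boundary_wedge_mem_deletion hx hu hK hxu.symm
      obtain ⟨w, hw, hwx⟩ := boundarySpace_mono hDK _ (hD _ ⟨h1, by
        rw [SetLike.mem_coe, LinearMap.mem_ker, map_add, fullBoundary_fullBoundary, LinearMap.mem_ker.1 hx0,
          add_zero]⟩)
      refine ⟨w - wedge k b u, sub_mem hw (wedge_mem_chainSpace (fun F hF => hF.2) hu), ?_⟩
      rw [map_sub, hwx, add_sub_cancel_right]
    · rintro ⟨y, hy, rfl⟩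
      refine ⟨-contract k b y, neg_mem (contract_mem_link hy), ?_⟩
      rw [map_neg, fullBoundary_contract, neg_neg]
  · rintro z ⟨hz, hz0⟩
    change ∂ z = 0 at hz0
    obtain ⟨w, hw, hwz⟩ := hD c ⟨chainSpace_mono hLD _ hz, hz0⟩
    have hw' := mem_chainSpace_deletion.1 hw
    refine ⟨wedge k b z - w, ⟨sub_mem (wedge_mem_chainSpace (fun F hF => hF.2) hz) hw'.1, ?_⟩, ?_⟩
    · rw [SetLike.mem_coe, LinearMap.mem_ker, map_sub, fullBoundary_wedge, hz0, map_zero, sub_zero, hwz, sub_self]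
    · rw [map_sub, hw'.2, contract_wedge_of_mem_link hz, sub_zero, sub_self]
      exact zero_mem _

/-- Comparison of `reducedBetti` with `homologyDim`. -/
lemma reducedBetti_eq_homologyDim (K : SimpComplex V) (j : ℕ) :
    reducedBetti k K j = homologyDim k K.faces (j + 1) := by
  classical
  let f (c : ℕ) : Chains k K c →ₗ[k] (Finset V → k) :=
    { toFun x F := if h : F ∈ K.faces ∧ F.card = c then x ⟨F, h⟩ else 0
      map_add' x y := by
        funext F
        by_cases h : F ∈ K.faces ∧ F.card = c
        · simp only [Pi.add_apply, dif_pos h]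
          rfl
        · simp only [Pi.add_apply, dif_neg h, add_zero]
      map_smul' a x := by
        funext F
        by_cases h : F ∈ K.faces ∧ F.card = c
        · simp only [Pi.smul_apply, dif_pos h]
          rfl
        · simp only [Pi.smul_apply, dif_neg h, smul_zero] }
  have hf : ∀ c x F, f c x F = if h : F ∈ K.faces ∧ F.card = c then x ⟨F, h⟩ else 0 :=
    fun _ _ _ => rfl
  have hinj : ∀ c, Function.Injective (f c) := by
    intro c x y hxy
    funext F
    have := congrFun hxy F.1
    rw [hf, hf, dif_pos F.2, dif_pos F.2] at this
    exact this
  have hmem : ∀ (c : ℕ) x, f c x ∈ chainSpace k K.faces c := by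
    intro c x F hF
    rw [hf] at hF
    split_ifs at hF with h
    · exact ⟨h.1, by exact_mod_cast h.2⟩
    · exact absurd rfl hF
  have hsurj : ∀ (c : ℕ) y, y ∈ chainSpace k K.faces c → ∃ x, f c x = y := by
    intro c y hy
    refine ⟨fun F => y F.1, ?_⟩
    funext F
    rw [hf]
    split_ifs with h
    · rfl
    · by_contra h0
      have := hy F (Ne.symm h0)
      exact h ⟨this.1, by exact_mod_cast this.2⟩
  have hcomm : ∀ c x, ∂ (f (c + 1) x) = f c (boundary k K c x) := by
    intro c x
    funext F
    rw [fullBoundary_eq_sum, Finset.sum_apply, hf]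
    split_ifs with h
    · have h1 : boundary k K c x ⟨F, h⟩ = ∑ v ∈ (Finset.univ \ F).attach,
          contract k v.1 (f (c + 1) x) F := by
        refine Finset.sum_congr rfl fun v _ => ?_
        have hv : v.1 ∉ F := (Finset.mem_sdiff.mp v.2).2
        rw [contract_apply, if_neg hv, hf]
        by_cases h' : insert v.1 F ∈ K.faces
        · rw [dif_pos h', dif_pos ⟨h', by rw [Finset.card_insert_of_notMem hv, h.2]⟩]
          rfl
        · rw [dif_neg h', dif_neg (fun h'' => h' h''.1), mul_zero]
      rw [h1, Finset.sum_attach _ (fun v => contract k v (f (c + 1) x) F)]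
      refine (Finset.sum_subset (Finset.subset_univ _) ?_).symm
      intro v _ hv
      rw [contract_apply, if_pos (by simpa using hv)]
    · refine Finset.sum_eq_zero fun v _ => ?_
      rw [contract_apply]
      split_ifs with hv
      · rfl
      · rw [hf, dif_neg, mul_zero]
        rintro ⟨h1, h2⟩
        rw [Finset.card_insert_of_notMem hv] at h2
        exact h ⟨K.down_closed _ h1 _ (Finset.subset_insert v F), by omega⟩
  refine finrank_quotient_comap_eq (f (j + 1)) ?_ ?_ ?_
  · intro x hx
    refine ⟨by exact_mod_cast hmem (j + 1) x, ?_⟩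
    rw [SetLike.mem_coe, LinearMap.mem_ker, hcomm, LinearMap.mem_ker.1 hx, map_zero]
  · intro x _
    constructor
    · rintro ⟨y, hy, hyx⟩
      obtain ⟨y, rfl⟩ := hsurj (j + 1 + 1) y (by exact_mod_cast hy)
      rw [hcomm] at hyx
      exact ⟨y, hinj _ hyx⟩
    · rintro ⟨y, rfl⟩
      exact ⟨f (j + 1 + 1) y, by exact_mod_cast hmem (j + 1 + 1) y, hcomm _ _⟩
  · rintro z ⟨hz, hz0⟩
    obtain ⟨x, rfl⟩ := hsurj (j + 1) z (by exact_mod_cast hz)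
    refine ⟨x, ?_, by simp⟩
    rw [SetLike.mem_coe, LinearMap.mem_ker, hcomm] at hz0
    exact LinearMap.mem_ker.2 (hinj _ (by rw [hz0, map_zero]))

lemma homologyDim_singleton_empty (c : ℤ) :
    homologyDim k ({∅} : Set (Finset V)) c = if c = 0 then 1 else 0 := by
  split_ifs with h
  · subst h
    have hB : boundarySpace k ({∅} : Set (Finset V)) 0 = ⊥ := by
      rw [boundarySpace, eq_bot_iff]
      rintro _ ⟨x, hx, rfl⟩
      rw [Submodule.mem_bot]
      suffices x = 0 by rw [this, map_zero]
      funext F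
      by_contra h
      obtain ⟨h1, h2⟩ := hx F h
      rw [Set.mem_singleton_iff.1 h1] at h2
      simp at h2
    have hk : Module.finrank k (↥(⊤ : Submodule k k) ⧸
        (⊥ : Submodule k k).comap (⊤ : Submodule k k).subtype) = 1 := by
      have : (⊥ : Submodule k k).comap (⊤ : Submodule k k).subtype = ⊥ :=
        LinearMap.ker_eq_bot.2 (Submodule.injective_subtype _)
      rw [this, (Submodule.quotEquivOfEqBot _ rfl).finrank_eq, finrank_top, Module.finrank_self]
    rw [homologyDim, ← hk, hB]
    symm
    refine finrank_quotient_comap_eq (LinearMap.single k (fun _ : Finset V => k) ∅) ?_ ?_ ?_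
    · intro a _
      refine ⟨fun F hF => ?_, ?_⟩
      · have : F = ∅ := by
          by_contra h
          simp [h] at hF
        simp [this]
      · rw [SetLike.mem_coe, LinearMap.mem_ker, fullBoundary_eq_sum]
        refine Finset.sum_eq_zero fun v _ => ?_
        funext F
        simp [contract_apply, (Finset.insert_ne_empty v F)]
    · simp
    · rintro z ⟨hz, -⟩
      refine ⟨z ∅, trivial, ?_⟩
      rw [Submodule.mem_bot, sub_eq_zero]
      funext F
      by_cases hF : F = ∅
      · simp [hF]
      · rw [LinearMap.single_apply, Pi.single_eq_of_ne hF]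
        by_contra h
        exact hF (hz F h).1
  · refine homologyDim_eq_zero ?_
    rintro x ⟨hx, -⟩
    suffices x = 0 by rw [this]; exact zero_mem _
    funext F
    by_contra h0
    obtain ⟨h1, h2⟩ := hx F h0
    rw [Set.mem_singleton_iff.1 h1] at h2
    exact h (by simpa using h2.symm)

end Homology

end SimpComplex

section Bipartite

variable {n m : ℕ}

lemma xVert_injective : Function.Injective (xVert : Fin n → Fin (n + m)) :=
  Fin.castAdd_injective n m

lemma yVert_injective : Function.Injective (yVert : Fin m → Fin (n + m)) :=
  Fin.natAdd_injective m n

lemma xVert_ne_yVert (i : Fin n) (j : Fin m) : xVert i ≠ yVert j := by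
  intro h
  have := congrArg Fin.val h
  simp only [xVert, yVert, Fin.val_castAdd, Fin.val_natAdd] at this
  omega

lemma xVert_mem_vset {X : Finset (Fin n)} {Y : Finset (Fin m)} {i : Fin n} :
    xVert i ∈ vset X Y ↔ i ∈ X := by
  simp [vset, xVert_injective.eq_iff, (xVert_ne_yVert _ _).symm]

lemma yVert_mem_vset {X : Finset (Fin n)} {Y : Finset (Fin m)} {j : Fin m} :
    yVert j ∈ vset X Y ↔ j ∈ Y := by
  simp [vset, yVert_injective.eq_iff, xVert_ne_yVert]

lemma card_vset (X : Finset (Fin n)) (Y : Finset (Fin m)) :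
    (vset X Y).card = X.card + Y.card := by
  rw [vset, Finset.card_union_of_disjoint, Finset.card_image_of_injective _ xVert_injective,
    Finset.card_image_of_injective _ yVert_injective]
  rw [Finset.disjoint_left]
  simp [(xVert_ne_yVert _ _).symm]

lemma subset_vset {X : Finset (Fin n)} {Y : Finset (Fin m)} {F : Finset (Fin (n + m))} :
    F ⊆ vset X Y ↔ (∀ i, xVert i ∈ F → i ∈ X) ∧ ∀ j, yVert j ∈ F → j ∈ Y := by
  refine ⟨fun h => ⟨fun i hi => xVert_mem_vset.1 (h hi), fun j hj => yVert_mem_vset.1 (h hj)⟩, ?_⟩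
  rintro ⟨h1, h2⟩ v
  refine Fin.addCases (fun i hi => ?_) (fun j hj => ?_) v
  · exact xVert_mem_vset.2 (h1 i hi)
  · exact yVert_mem_vset.2 (h2 j hj)

/-- The independent sets of the subgraph of `E` induced on `X ⊔ Y`. -/
def indepSets (E : Finset (Fin n × Fin m)) (X : Finset (Fin n)) (Y : Finset (Fin m)) :
    Set (Finset (Fin (n + m))) := ((indepComplex E).induced (vset X Y)).faces

lemma mem_indepSets {E : Finset (Fin n × Fin m)} {X : Finset (Fin n)} {Y : Finset (Fin m)}
    {F : Finset (Fin (n + m))} : F ∈ indepSets E X Y ↔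
      (∀ i j, (i, j) ∈ E → xVert i ∈ F → yVert j ∉ F) ∧
      (∀ i, xVert i ∈ F → i ∈ X) ∧ ∀ j, yVert j ∈ F → j ∈ Y := by
  change (∀ p ∈ E, ¬(xVert p.1 ∈ F ∧ yVert p.2 ∈ F)) ∧ F ⊆ vset X Y ↔ _
  rw [subset_vset]
  simp [Prod.forall]

lemma indepSets_down_closed (E : Finset (Fin n × Fin m)) (X : Finset (Fin n))
    (Y : Finset (Fin m)) : ∀ F ∈ indepSets E X Y, ∀ G ⊆ F, G ∈ indepSets E X Y :=
  ((indepComplex E).induced (vset X Y)).down_closed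

lemma deletion_xVert (E : Finset (Fin n × Fin m)) (X : Finset (Fin n)) (Y : Finset (Fin m))
    (x : Fin n) : deletion (indepSets E X Y) (xVert x) = indepSets E (X.erase x) Y := by
  ext F
  simp only [deletion, Set.mem_ofPred_eq, mem_indepSets, Finset.mem_erase]
  constructor
  · rintro ⟨h, h1, h2, h3⟩
    exact ⟨h1, fun i hi => ⟨fun hix => h (hix ▸ hi), h2 i hi⟩, h3⟩
  · rintro ⟨h1, h2, h3⟩
    exact ⟨fun h => (h2 x h).1 rfl, h1, fun i hi => (h2 i hi).2, h3⟩

lemma deletion_yVert (E : Finset (Fin n × Fin m)) (X : Finset (Fin n)) (Y : Finset (Fin m))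
    (y : Fin m) : deletion (indepSets E X Y) (yVert y) = indepSets E X (Y.erase y) := by
  ext F
  simp only [deletion, Set.mem_ofPred_eq, mem_indepSets, Finset.mem_erase]
  constructor
  · rintro ⟨h, h1, h2, h3⟩
    exact ⟨h1, h2, fun i hi => ⟨fun hix => h (hix ▸ hi), h3 i hi⟩⟩
  · rintro ⟨h1, h2, h3⟩
    exact ⟨fun h => (h3 y h).1 rfl, h1, h2, fun i hi => (h3 i hi).2⟩

lemma link_xVert (E : Finset (Fin n × Fin m)) {X : Finset (Fin n)} (Y : Finset (Fin m))
    {x : Fin n} (hx : x ∈ X) : link (indepSets E X Y) (xVert x) =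
      indepSets E (X.erase x) (Y.filter fun y => (x, y) ∉ E) := by
  ext F
  simp only [link, Set.mem_ofPred_eq, mem_indepSets, Finset.mem_erase, Finset.mem_filter,
    Finset.mem_insert, xVert_injective.eq_iff, (xVert_ne_yVert _ _).symm, false_or]
  constructor
  · rintro ⟨h, h1, h2, h3⟩
    exact ⟨fun i j hij hi => h1 i j hij (Or.inr hi),
      fun i hi => ⟨fun hix => h (hix ▸ hi), h2 i (Or.inr hi)⟩,
      fun j hj => ⟨h3 j hj, fun hxj => h1 x j hxj (Or.inl rfl) hj⟩⟩
  · rintro ⟨h1, h2, h3⟩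
    refine ⟨fun h => (h2 x h).1 rfl, ?_, ?_, fun j hj => (h3 j hj).1⟩
    · rintro i j hij (rfl | hi) hj
      · exact (h3 j hj).2 hij
      · exact h1 i j hij hi hj
    · rintro i (rfl | hi)
      · exact hx
      · exact (h2 i hi).2

lemma link_yVert (E : Finset (Fin n × Fin m)) (X : Finset (Fin n)) {Y : Finset (Fin m)}
    {y : Fin m} (hy : y ∈ Y) : link (indepSets E X Y) (yVert y) =
      indepSets E (X.filter fun x => (x, y) ∉ E) (Y.erase y) := by
  ext F
  simp only [link, Set.mem_ofPred_eq, mem_indepSets, Finset.mem_erase, Finset.mem_filter,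
    Finset.mem_insert, yVert_injective.eq_iff, xVert_ne_yVert, false_or]
  constructor
  · rintro ⟨h, h1, h2, h3⟩
    exact ⟨fun i j hij hi hj => h1 i j hij hi (Or.inr hj),
      fun i hi => ⟨h2 i hi, fun hiy => h1 i y hiy hi (Or.inl rfl)⟩,
      fun j hj => ⟨fun hjy => h (hjy ▸ hj), h3 j (Or.inr hj)⟩⟩
  · rintro ⟨h1, h2, h3⟩
    refine ⟨fun h => (h3 y h).1 rfl, ?_, fun i hi => (h2 i hi).1, ?_⟩
    · rintro i j hij hi (rfl | hj)
      · exact (h2 i hi).2 hij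
      · exact h1 i j hij hi hj
    · rintro j (rfl | hj)
      · exact hy
      · exact (h3 j hj).2

variable (k : Type*) [Field k] {E : Finset (Fin n × Fin m)} {X : Finset (Fin n)}
  {Y : Finset (Fin m)}

lemma acyclic_of_isolated_x {x : Fin n} (hx : x ∈ X) (h : ∀ y ∈ Y, (x, y) ∉ E) (c : ℤ) :
    cycleSpace k (indepSets E X Y) c ≤ boundarySpace k (indepSets E X Y) c := by
  refine cycleSpace_le_boundarySpace_of_cone (xVert x) (fun F hF => ?_) c
  simp only [mem_indepSets, Finset.mem_insert, xVert_injective.eq_iff,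
    (xVert_ne_yVert _ _).symm, false_or] at hF ⊢
  obtain ⟨h1, h2, h3⟩ := hF
  refine ⟨?_, ?_, h3⟩
  · rintro i j hij (rfl | hi) hj
    · exact h j (h3 j hj) hij
    · exact h1 i j hij hi hj
  · rintro i (rfl | hi)
    · exact hx
    · exact h2 i hi

lemma acyclic_of_isolated_y {y : Fin m} (hy : y ∈ Y) (h : ∀ x ∈ X, (x, y) ∉ E) (c : ℤ) :
    cycleSpace k (indepSets E X Y) c ≤ boundarySpace k (indepSets E X Y) c := by
  refine cycleSpace_le_boundarySpace_of_cone (yVert y) (fun F hF => ?_) c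
  simp only [mem_indepSets, Finset.mem_insert, yVert_injective.eq_iff,
    xVert_ne_yVert, false_or] at hF ⊢
  obtain ⟨h1, h2, h3⟩ := hF
  refine ⟨?_, h2, ?_⟩
  · rintro i j hij hi (rfl | hj)
    · exact h i (h2 i hi) hij
    · exact h1 i j hij hi hj
  · rintro j (rfl | hj)
    · exact hy
    · exact h3 j hj

/-- A vertex `x` whose neighborhood contains that of `x₀` can be removed. -/
lemma homologyDim_erase_x {x₀ x : Fin n} (hx₀ : x₀ ∈ X) (hx : x ∈ X) (hne : x₀ ≠ x)
    (h : ∀ y ∈ Y, (x₀, y) ∈ E → (x, y) ∈ E) (c : ℤ) :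
    homologyDim k (indepSets E (X.erase x) Y) c = homologyDim k (indepSets E X Y) c := by
  rw [← deletion_xVert]
  refine homologyDim_deletion (indepSets_down_closed E X Y) _ (fun c => ?_) c
  rw [link_xVert E Y hx]
  refine acyclic_of_isolated_x k (Finset.mem_erase.2 ⟨hne, hx₀⟩) (fun y hy hxy => ?_) c
  rw [Finset.mem_filter] at hy
  exact hy.2 (h y hy.1 hxy)

/-- A vertex `y` whose neighborhood contains that of `y₀` can be removed. -/
lemma homologyDim_erase_y {y₀ y : Fin m} (hy₀ : y₀ ∈ Y) (hy : y ∈ Y) (hne : y₀ ≠ y)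
    (h : ∀ x ∈ X, (x, y₀) ∈ E → (x, y) ∈ E) (c : ℤ) :
    homologyDim k (indepSets E X (Y.erase y)) c = homologyDim k (indepSets E X Y) c := by
  rw [← deletion_yVert]
  refine homologyDim_deletion (indepSets_down_closed E X Y) _ (fun c => ?_) c
  rw [link_yVert E X hy]
  refine acyclic_of_isolated_y k (Finset.mem_erase.2 ⟨hne, hy₀⟩) (fun x hx hxy => ?_) c
  rw [Finset.mem_filter] at hx
  exact hx.2 (h x hx.1 hxy)

lemma homologyDim_fold_x {X₁ : Finset (Fin n)} (hX : X₁ ⊆ X) {x₀ : Fin n} (hx₀ : x₀ ∈ X₁)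
    (h : ∀ x ∈ X, x ∉ X₁ → ∀ y ∈ Y, (x₀, y) ∈ E → (x, y) ∈ E) (c : ℤ) :
    homologyDim k (indepSets E X Y) c = homologyDim k (indepSets E X₁ Y) c := by
  induction hN : (X \ X₁).card generalizing X with
  | zero =>
    rw [Finset.card_eq_zero, Finset.sdiff_eq_empty_iff_subset] at hN
    rw [hN.antisymm hX]
  | succ N ih =>
    obtain ⟨x, hx⟩ := Finset.card_pos.1 (by omega : 0 < (X \ X₁).card)
    rw [Finset.mem_sdiff] at hx
    rw [← homologyDim_erase_x k (hX hx₀) hx.1 (fun h => hx.2 (h ▸ hx₀)) (h x hx.1 hx.2)]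
    refine ih (fun z hz => Finset.mem_erase.2 ⟨fun h => hx.2 (h ▸ hz), hX hz⟩)
      (fun z hz => h z (Finset.mem_of_mem_erase hz)) ?_
    rw [Finset.erase_sdiff_comm, Finset.card_erase_of_mem (Finset.mem_sdiff.2 hx), hN]
    omega

lemma homologyDim_fold_y {Y₁ : Finset (Fin m)} (hY : Y₁ ⊆ Y) {y₀ : Fin m} (hy₀ : y₀ ∈ Y₁)
    (h : ∀ y ∈ Y, y ∉ Y₁ → ∀ x ∈ X, (x, y₀) ∈ E → (x, y) ∈ E) (c : ℤ) :
    homologyDim k (indepSets E X Y) c = homologyDim k (indepSets E X Y₁) c := by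
  induction hN : (Y \ Y₁).card generalizing Y with
  | zero =>
    rw [Finset.card_eq_zero, Finset.sdiff_eq_empty_iff_subset] at hN
    rw [hN.antisymm hY]
  | succ N ih =>
    obtain ⟨y, hy⟩ := Finset.card_pos.1 (by omega : 0 < (Y \ Y₁).card)
    rw [Finset.mem_sdiff] at hy
    rw [← homologyDim_erase_y k (hY hy₀) hy.1 (fun h => hy.2 (h ▸ hy₀)) (h y hy.1 hy.2)]
    refine ih (fun z hz => Finset.mem_erase.2 ⟨fun h => hy.2 (h ▸ hz), hY hz⟩)
      (fun z hz => h z (Finset.mem_of_mem_erase hz)) ?_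
    rw [Finset.erase_sdiff_comm, Finset.card_erase_of_mem (Finset.mem_sdiff.2 hy), hN]
    omega

/-- Removing the closed neighborhood of the neighbor `y` of a leaf `x` shifts homology. -/
lemma homologyDim_leaf {x : Fin n} {y : Fin m} (hx : x ∈ X) (hy : y ∈ Y)
    (h : ∀ z ∈ Y, (x, z) ∈ E → z = y) (c : ℤ) :
    homologyDim k (indepSets E X Y) (c + 1) =
      homologyDim k (indepSets E (X.filter fun x => (x, y) ∉ E) (Y.erase y)) c := by
  rw [← link_yVert E X hy]
  refine homologyDim_link (indepSets_down_closed E X Y) _ (fun c => ?_) c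
  rw [deletion_yVert]
  refine acyclic_of_isolated_x k hx (fun z hz hxz => ?_) c
  rw [Finset.mem_erase] at hz
  exact hz.1 (h z hz.2 hxz)

lemma indepSets_empty (E : Finset (Fin n × Fin m)) : indepSets E ∅ ∅ = {∅} := by
  ext F
  rw [Set.mem_singleton_iff]
  constructor
  · rintro ⟨-, h⟩
    simpa [vset] using h
  · rintro rfl
    simp [mem_indepSets]

/-- The homology of the independence complex of a disjoint union of stars. -/
lemma homologyDim_stars (f : Fin n → Fin m) (hY : Y = X.image f)
    (h : ∀ x ∈ X, ∀ y ∈ Y, ((x, y) ∈ E ↔ y = f x)) (c : ℤ) :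
    homologyDim k (indepSets E X Y) c = if c = Y.card then 1 else 0 := by
  induction hN : Y.card generalizing X Y c with
  | zero =>
    rw [Finset.card_eq_zero] at hN
    subst hN
    have hX : X = ∅ := Finset.image_eq_empty.1 hY.symm
    rw [hX, indepSets_empty, homologyDim_singleton_empty]
    simp
  | succ N ih =>
    obtain ⟨y, hy⟩ := Finset.card_pos.1 (by omega : 0 < Y.card)
    obtain ⟨x, hx, rfl⟩ := Finset.mem_image.1 (hY ▸ hy)
    obtain ⟨c, rfl⟩ : ∃ c' : ℤ, c = c' + 1 := ⟨c - 1, by ring⟩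
    rw [homologyDim_leaf k hx hy (fun z hz hxz => (h x hx z hz).1 hxz), ih]
    · simp
    · subst hY
      ext z
      simp only [Finset.mem_erase, Finset.mem_image, Finset.mem_filter]
      constructor
      · rintro ⟨hz, a, ha, rfl⟩
        exact ⟨a, ⟨ha, fun hE => hz ((h a ha _ hy).1 hE).symm⟩, rfl⟩
      · rintro ⟨a, ⟨ha, haE⟩, rfl⟩
        exact ⟨fun he => haE ((h a ha _ hy).2 he.symm), a, ha, rfl⟩
    · exact fun a ha z hz => h a (Finset.mem_of_mem_filter a ha) z (Finset.mem_of_mem_erase hz)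
    · rw [Finset.card_erase_of_mem hy, hN]
      omega

lemma bettiFine_vset (hX : X.Nonempty) (i : ℕ) :
    bettiFine k (indepComplex E) i (vset X Y) =
      homologyDim k (indepSets E X Y) (X.card + Y.card - i - 1) := by
  rw [bettiFine, card_vset]
  split_ifs with h
  · rw [reducedBetti_eq_homologyDim]
    congr 1
    omega
  · symm
    refine homologyDim_eq_zero ?_
    rintro z ⟨hz, -⟩
    obtain ⟨x, hx⟩ := hX
    have h0 : ∀ F, z F ≠ 0 → F = ∅ ∧ ((X.card : ℤ) + Y.card - i - 1) = 0 := by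
      intro F hF
      have := (hz F hF).2
      exact ⟨Finset.card_eq_zero.1 (by omega), by omega⟩
    have hz0 : fullBoundary (Fin (n + m)) k z = 0 := by
      rw [fullBoundary_eq_sum]
      refine Finset.sum_eq_zero fun v _ => ?_
      funext F
      rw [contract_apply]
      split_ifs
      · rfl
      · by_contra hne
        exact Finset.insert_ne_empty _ _ (h0 _ (right_ne_zero_of_mul hne)).1
    refine ⟨wedge k (xVert x) z, ?_, by rw [fullBoundary_wedge, hz0, map_zero, sub_zero]⟩
    refine wedge_mem_chainSpace (L := {∅}) ?_ (fun F hF => ⟨(h0 F hF).1, (hz F hF).2⟩)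
    rintro F rfl
    simp [mem_indepSets, xVert_injective.eq_iff, (xVert_ne_yVert _ _).symm, hx]

end Bipartite

section Computation

variable {n m : ℕ} (k : Type*) [Field k] {E : Finset (Fin n × Fin m)}

lemma mem_nbr {x : Fin n} {y : Fin m} : y ∈ nbr E x ↔ (x, y) ∈ E := by
  simp [nbr]

/-- Homology of the induced subgraph on `X ⊔ Y` when the neighborhoods in `X₁ ⊆ X` are of the form
`C ∪ {f x}` and all other neighborhoods contain the one of `x₀ ∈ X₁`. -/
lemma homologyDim_indepSets_of_near {X X₁ : Finset (Fin n)} (hX : X₁ ⊆ X) {x₀ : Fin n}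
    (hx₀ : x₀ ∈ X₁) {C : Finset (Fin m)} {f : Fin n → Fin m} (hf : ∀ x ∈ X₁, f x ∉ C)
    (hN : ∀ x ∈ X₁, ∀ y, (x, y) ∈ E ↔ y = f x ∨ y ∈ C)
    (hbig : ∀ x ∈ X, x ∉ X₁ → ∀ y, (x₀, y) ∈ E → (x, y) ∈ E) (Y : Finset (Fin m)) (c : ℤ) :
    homologyDim k (indepSets E X Y) c =
      (if Y ⊆ C ∧ Y.Nonempty ∧ c = 1 then 1 else 0) +
      (if X₁.image f ⊆ Y ∧ Y ⊆ C ∪ X₁.image f ∧ c = (X₁.image f).card then 1 else 0) := by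
  rw [homologyDim_fold_x k hX hx₀ (fun x hx hx1 y _ => hbig x hx hx1 y)]
  set T := X₁.image f with hT
  have hfT : ∀ x ∈ X₁, f x ∈ T := fun x hx => Finset.mem_image_of_mem f hx
  have hTC : ∀ y ∈ T, y ∉ C := by
    intro y hy
    obtain ⟨x, hx, rfl⟩ := Finset.mem_image.1 hy
    exact hf x hx
  by_cases hYC : Y ⊆ C
  · have hTY : ¬ T ⊆ Y := fun h => hf x₀ hx₀ (hYC (h (hfT x₀ hx₀)))
    simp only [hYC, hTY, true_and, false_and, if_false, add_zero]
    rcases Y.eq_empty_or_nonempty with rfl | ⟨y, hy⟩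
    · rw [homologyDim_eq_zero (acyclic_of_isolated_x k hx₀ (by simp) c)]
      simp
    · rw [homologyDim_fold_y k (Finset.singleton_subset_iff.2 hy) (Finset.mem_singleton_self y)
        (fun z hz _ x hx _ => (hN x hx z).2 (Or.inr (hYC hz))),
        homologyDim_stars k (fun _ => y) (Finset.image_const ⟨x₀, hx₀⟩ y).symm]
      · simp [show Y.Nonempty from ⟨y, hy⟩]
      · intro x hx z hz
        rw [Finset.mem_singleton] at hz
        subst hz
        simp [(hN x hx z).2 (Or.inr (hYC hy))]
  simp only [hYC, false_and, if_false, zero_add]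
  by_cases hYT : Y ⊆ C ∪ T
  swap
  · obtain ⟨y, hy, hyCT⟩ := Finset.not_subset.1 hYT
    rw [Finset.mem_union, not_or] at hyCT
    rw [homologyDim_eq_zero (acyclic_of_isolated_y k hy (fun x hx hxy => ?_) c)]
    · simp [hYT]
    · rcases (hN x hx y).1 hxy with rfl | h
      · exact hyCT.2 (hfT x hx)
      · exact hyCT.1 h
  obtain ⟨t, htY, htC⟩ := Finset.not_subset.1 hYC
  have htT : t ∈ Y ∩ T := by
    have := hYT htY
    grind
  rw [homologyDim_fold_y k (Finset.inter_subset_left (s₂ := T)) htT]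
  swap
  · intro y hy hyT x hx _
    refine (hN x hx y).2 (Or.inr ?_)
    have := hYT hy
    grind
  by_cases hTY : T ⊆ Y
  · rw [Finset.inter_eq_right.2 hTY, homologyDim_stars k f hT]
    · simp [hTY, hYT]
    · intro x hx y hy
      rw [hN x hx y]
      simp [hTC y hy]
  · obtain ⟨y, hyT, hyY⟩ := Finset.not_subset.1 hTY
    obtain ⟨x, hx, rfl⟩ := Finset.mem_image.1 hyT
    rw [homologyDim_eq_zero (acyclic_of_isolated_x k hx (fun z hz hxz => ?_) c)]
    · simp [hTY]
    · rw [Finset.mem_inter] at hz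
      rcases (hN x hx z).1 hxz with rfl | h
      · exact hyY hz.1
      · exact hTC z hz.2 h

/-- The coarse Betti numbers of a nearly row-nested graph. -/
lemma bettiCoarse_of_nearlyRowNested (h : NearlyRowNested E) {X : Finset (Fin n)} {x₀ : Fin n}
    (hx₀ : x₀ ∈ X) (hmin : ∀ x ∈ X, degG E x₀ ≤ degG E x) (i : ℕ) :
    bettiCoarse k E i X =
      if X.card ≤ i + 1 then (degG E x₀).choose (i + 2 - X.card) else 0 := by
  have hX : X.Nonempty := ⟨x₀, hx₀⟩
  simp only [bettiCoarse, bettiFine_vset k hX]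
  rcases Nat.eq_zero_or_pos (degG E x₀) with hd | hd
  · rw [Finset.sum_eq_zero, hd]
    · split_ifs with hi
      · rw [Nat.choose_eq_zero_of_lt (by omega)]
      · rfl
    · intro Y _
      refine homologyDim_eq_zero (acyclic_of_isolated_x k hx₀ (fun y _ hy => ?_) _)
      rw [degG, Finset.card_eq_zero] at hd
      simpa [hd] using mem_nbr.2 hy
  obtain ⟨C, hCsub, hCcard⟩ := Finset.exists_subset_card_eq (h.2 (degG E x₀) ⟨x₀, rfl⟩)
  have hex : ∀ x, degG E x = degG E x₀ → ∃ y, y ∉ C ∧ insert y C = nbr E x := by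
    intro x hx
    refine (Finset.exists_eq_insert_iff.2 ⟨fun y hy => ?_, ?_⟩)
    · exact (Finset.mem_filter.1 (hCsub hy)).2 x hx
    · rw [hCcard, ← degG, hx]
      omega
  obtain ⟨y₀, -⟩ := hex x₀ rfl
  have hex' : ∀ x, ∃ y, degG E x = degG E x₀ → y ∉ C ∧ insert y C = nbr E x := by
    intro x
    by_cases hx : degG E x = degG E x₀
    · obtain ⟨y, hy⟩ := hex x hx
      exact ⟨y, fun _ => hy⟩
    · exact ⟨y₀, fun hx' => absurd hx' hx⟩
  choose f hf using hex'
  set X₁ := X.filter fun x => degG E x = degG E x₀ with hX₁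
  have hx₁ : x₀ ∈ X₁ := Finset.mem_filter.2 ⟨hx₀, rfl⟩
  have key := homologyDim_indepSets_of_near k (E := E) (Finset.filter_subset _ X) hx₁ (C := C)
    (f := f) (fun x hx => (hf x (Finset.mem_filter.1 hx).2).1)
    (fun x hx y => by
      rw [← mem_nbr, ← (hf x (Finset.mem_filter.1 hx).2).2, Finset.mem_insert])
    (fun x hx hx' y hy => by
      refine mem_nbr.1 ((h.1 x₀ x ?_).1 (mem_nbr.2 hy))
      refine lt_of_le_of_ne (hmin x hx) fun he => hx' (Finset.mem_filter.2 ⟨hx, he.symm⟩))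
  have hTC : Disjoint (X₁.image f) C := by
    rw [Finset.disjoint_left]
    intro y hy
    obtain ⟨x, hx, rfl⟩ := Finset.mem_image.1 hy
    exact (hf x (Finset.mem_filter.1 hx).2).1
  have hTne : (X₁.image f).Nonempty := ⟨f x₀, Finset.mem_image_of_mem f hx₁⟩
  generalize X₁.image f = T at key hTC hTne
  simp only [key, Finset.sum_add_distrib, Finset.sum_boole, Nat.cast_id]
  split_ifs with hi
  · have h1 : (Finset.univ.filter fun Y : Finset (Fin m) =>
        Y ⊆ C ∧ Y.Nonempty ∧ (X.card : ℤ) + Y.card - i - 1 = 1) =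
        Finset.powersetCard (i + 2 - X.card) C := by
      ext Y
      simp only [Finset.mem_filter, Finset.mem_univ, true_and, Finset.mem_powersetCard,
        ← Finset.card_pos]
      refine and_congr_right fun _ => ?_
      omega
    have h2 : (Finset.univ.filter fun Y : Finset (Fin m) =>
        T ⊆ Y ∧ Y ⊆ C ∪ T ∧ (X.card : ℤ) + Y.card - i - 1 = T.card).card =
        (Finset.powersetCard (i + 1 - X.card) C).card := by
      refine Finset.card_bij' (fun Y _ => Y \ T) (fun Y _ => Y ∪ T) ?_ ?_ ?_ ?_
      · intro Y hY
        simp only [Finset.mem_filter, Finset.mem_univ, true_and] at hY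
        rw [Finset.mem_powersetCard]
        refine ⟨?_, ?_⟩
        · intro y hy
          have := hY.2.1 (Finset.mem_sdiff.1 hy).1
          grind
        · rw [Finset.card_sdiff_of_subset hY.1]
          have := Finset.card_le_card hY.1
          omega
      · intro Y hY
        rw [Finset.mem_powersetCard] at hY
        simp only [Finset.mem_filter, Finset.mem_univ, true_and]
        refine ⟨Finset.subset_union_right, Finset.union_subset_union_left hY.1, ?_⟩
        rw [Finset.card_union_of_disjoint (hTC.symm.mono_left hY.1)]
        push_cast
        omega
      · intro Y hY
        simp only [Finset.mem_filter, Finset.mem_univ, true_and] at hY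
        exact Finset.sdiff_union_of_subset hY.1
      · intro Y hY
        rw [Finset.mem_powersetCard] at hY
        rw [Finset.union_sdiff_right]
        exact Finset.sdiff_eq_self_of_disjoint (hTC.symm.mono_left hY.1)
    rw [h1, h2, Finset.card_powersetCard, Finset.card_powersetCard, hCcard]
    obtain ⟨d, hd'⟩ : ∃ d, degG E x₀ = d + 1 := ⟨_, (Nat.succ_pred_eq_of_pos hd).symm⟩
    rw [hd', show i + 2 - X.card = (i + 1 - X.card) + 1 by omega, Nat.choose_succ_succ,
      Nat.add_sub_cancel, add_comm]
  · rw [Finset.filter_false_of_mem, Finset.filter_false_of_mem]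
    · rfl
    · rintro Y - ⟨hTY, hYC, hc⟩
      have := Finset.card_le_card hTY
      omega
    · rintro Y - ⟨-, hY, hc⟩
      have := Finset.card_pos.2 hY
      omega

lemma nbr_ferrers (E : Finset (Fin n × Fin m)) (x : Fin n) :
    nbr (ferrers E) x = Finset.univ.filter fun y : Fin m => (y : ℕ) < degG E x := by
  ext y
  simp [nbr, ferrers]

lemma degG_ferrers (E : Finset (Fin n × Fin m)) (x : Fin n) :
    degG (ferrers E) x = degG E x := by
  have h : degG E x ≤ m := (Finset.card_le_univ _).trans_eq (Fintype.card_fin m)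
  rw [degG, nbr_ferrers, Fin.card_filter_val_lt, min_eq_right h]

lemma nearlyRowNested_ferrers (E : Finset (Fin n × Fin m)) : NearlyRowNested (ferrers E) := by
  refine ⟨fun x₁ x₂ h => ?_, ?_⟩
  · refine Finset.ssubset_iff_subset_ne.2 ⟨fun y hy => ?_, fun he => h.ne (by rw [he])⟩
    have h' : degG E x₁ < degG E x₂ := by
      rw [← degG_ferrers E x₁, ← degG_ferrers E x₂]
      exact h
    rw [nbr_ferrers, Finset.mem_filter] at hy ⊢
    exact ⟨hy.1, hy.2.trans h'⟩
  · rintro c ⟨x, hx⟩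
    refine (Nat.sub_le c 1).trans ?_
    rw [← hx]
    refine Finset.card_le_card fun y hy => Finset.mem_filter.2 ⟨Finset.mem_univ y, fun z hz => ?_⟩
    have h' : degG E z = degG E x := by
      rw [← degG_ferrers E z, ← degG_ferrers E x]
      exact hz
    rw [nbr_ferrers] at hy ⊢
    rwa [h']

lemma bettiCoarse_empty (E : Finset (Fin n × Fin m)) (i : ℕ) : bettiCoarse k E i ∅ = 0 := by
  refine Finset.sum_eq_zero fun Y _ => ?_
  rw [bettiFine]
  split_ifs with h
  · rw [card_vset, Finset.card_empty] at h
    obtain ⟨y, hy⟩ := Finset.card_pos.1 (by omega : 0 < Y.card)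
    rw [reducedBetti_eq_homologyDim]
    exact homologyDim_eq_zero (acyclic_of_isolated_y k hy (by simp) _)
  · rfl

end Computation

section Converse

variable {n m : ℕ} (k : Type*) [Field k] {E : Finset (Fin n × Fin m)}

lemma homologyDim_indepSets_pair {X : Finset (Fin n)} {x₁ x₂ : Fin n} {y₁ y₂ : Fin m}
    (hx₁ : x₁ ∈ X) (hx₂ : x₂ ∈ X) (h₁₁ : (x₁, y₁) ∈ E) (h₁₂ : (x₁, y₂) ∉ E) (h₂₁ : (x₂, y₁) ∉ E)
    (h₂₂ : (x₂, y₂) ∈ E) (hX : ∀ x ∈ X, (x, y₁) ∈ E ∨ (x, y₂) ∈ E) :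
    homologyDim k (indepSets E X {y₁, y₂}) 2 = 1 := by
  have hne : y₁ ≠ y₂ := by
    rintro rfl
    exact h₁₂ h₁₁
  set X₁ := X.filter fun x => ¬((x, y₁) ∈ E ∧ (x, y₂) ∈ E) with hX₁
  have hx₁' : x₁ ∈ X₁ := Finset.mem_filter.2 ⟨hx₁, fun h => h₁₂ h.2⟩
  have hx₂' : x₂ ∈ X₁ := Finset.mem_filter.2 ⟨hx₂, fun h => h₂₁ h.1⟩
  rw [homologyDim_fold_x k (Finset.filter_subset _ X) hx₁', ← hX₁,
    homologyDim_stars k (fun x => if (x, y₁) ∈ E then y₁ else y₂)]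
  · rw [Finset.card_pair hne]
    simp
  · ext y
    simp only [Finset.mem_insert, Finset.mem_singleton, Finset.mem_image]
    constructor
    · rintro (rfl | rfl)
      · exact ⟨x₁, hx₁', by simp [h₁₁]⟩
      · exact ⟨x₂, hx₂', by simp [h₂₁]⟩
    · rintro ⟨x, -, rfl⟩
      split_ifs <;> simp
  · intro x hx y hy
    obtain ⟨hxX, hxn⟩ := Finset.mem_filter.1 hx
    have := hX x hxX
    simp only [Finset.mem_insert, Finset.mem_singleton] at hy
    rcases hy with rfl | rfl <;> split_ifs with h <;> grind
  · intro x hx hx' y hy _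
    have : (x, y₁) ∈ E ∧ (x, y₂) ∈ E := by
      by_contra h
      exact hx' (Finset.mem_filter.2 ⟨hx, h⟩)
    simp only [Finset.mem_insert, Finset.mem_singleton] at hy
    rcases hy with rfl | rfl
    · exact this.1
    · exact this.2

variable {k}

/-- If the coarse Betti numbers agree with those of the Ferrers graph, then common neighbors of `X`
together with pairs carrying one-dimensional homology are bounded by the degrees in `X`. -/
lemma card_add_card_le_degG
    (h : ∀ (X' : Finset (Fin n)) (i : ℕ), bettiCoarse k E i X' = bettiCoarse k (ferrers E) i X')
    {X : Finset (Fin n)} {x : Fin n} (hx : x ∈ X) {D : Finset (Fin m)}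
    {P : Finset (Finset (Fin m))} (hD : ∀ y ∈ D, ∀ z ∈ X, (z, y) ∈ E)
    (hP : ∀ Y ∈ P, Y.card = 2 ∧ homologyDim k (indepSets E X Y) 2 = 1) :
    D.card + P.card ≤ degG E x := by
  have hXpos := Finset.card_pos.2 ⟨x, hx⟩
  obtain ⟨x₀, hx₀, hmin⟩ := Finset.exists_min_image X (degG E) ⟨x, hx⟩
  have hβ : bettiCoarse k E (X.card - 1) X = degG E x₀ := by
    rw [h, bettiCoarse_of_nearlyRowNested k (nearlyRowNested_ferrers E) hx₀
      (by simpa only [degG_ferrers] using hmin), if_pos (by omega), degG_ferrers,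
      show X.card - 1 + 2 - X.card = 1 by omega, Nat.choose_one_right]
  refine le_trans ?_ (hmin x hx)
  rw [← hβ, bettiCoarse]
  have hdisj : Disjoint (D.image fun y => ({y} : Finset (Fin m))) P := by
    rw [Finset.disjoint_left]
    intro Y hY hYP
    obtain ⟨y, -, rfl⟩ := Finset.mem_image.1 hY
    simpa using (hP _ hYP).1
  have hcard : D.card + P.card = ((D.image fun y => ({y} : Finset (Fin m))) ∪ P).card := by
    rw [Finset.card_union_of_disjoint hdisj,
      Finset.card_image_of_injective _ Finset.singleton_injective]
  rw [hcard, Finset.card_eq_sum_ones]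
  refine (Finset.sum_le_sum fun Y hY => ?_).trans
    (Finset.sum_le_sum_of_subset (Finset.subset_univ _))
  rw [bettiFine_vset k ⟨x, hx⟩,
    show (X.card : ℤ) + Y.card - (X.card - 1 : ℕ) - 1 = Y.card by omega]
  rcases Finset.mem_union.1 hY with hY | hY
  · obtain ⟨y, hy, rfl⟩ := Finset.mem_image.1 hY
    rw [homologyDim_stars k (fun _ => y) (Finset.image_const ⟨x, hx⟩ y).symm]
    · simp
    · intro z hz w hw
      rw [Finset.mem_singleton] at hw
      simp [hw, hD y hy z hz]
  · obtain ⟨h1, h2⟩ := hP Y hY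
    rw [h1]
    exact h2.ge

lemma card_sdiff_mul_card_sdiff_le
    (h : ∀ (X' : Finset (Fin n)) (i : ℕ), bettiCoarse k E i X' = bettiCoarse k (ferrers E) i X')
    (x₁ x₂ : Fin n) :
    (nbr E x₁ \ nbr E x₂).card * (nbr E x₂ \ nbr E x₁).card ≤ (nbr E x₁ \ nbr E x₂).card := by
  set A := nbr E x₁ \ nbr E x₂ with hA
  set B := nbr E x₂ \ nbr E x₁ with hB
  have hinj : Set.InjOn (fun p : Fin m × Fin m => ({p.1, p.2} : Finset (Fin m)))
      (A ×ˢ B : Finset (Fin m × Fin m)) := by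
    rintro ⟨a, b⟩ hab ⟨a', b'⟩ hab' he
    simp only [Finset.coe_product, Set.mem_prod, Finset.mem_coe, hA, hB, Finset.mem_sdiff]
      at hab hab'
    have h1 : a ∈ ({a', b'} : Finset (Fin m)) := by
      rw [← (show ({a, b} : Finset (Fin m)) = {a', b'} from he)]
      simp
    have h2 : b ∈ ({a', b'} : Finset (Fin m)) := by
      rw [← (show ({a, b} : Finset (Fin m)) = {a', b'} from he)]
      simp
    simp only [Finset.mem_insert, Finset.mem_singleton] at h1 h2
    grind
  have key := card_add_card_le_degG h (X := {x₁, x₂}) (x := x₁) (by simp)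
    (D := nbr E x₁ ∩ nbr E x₂)
    (P := (A ×ˢ B).image fun p => {p.1, p.2})
    (by
      intro y hy z hz
      rw [Finset.mem_inter, mem_nbr, mem_nbr] at hy
      simp only [Finset.mem_insert, Finset.mem_singleton] at hz
      rcases hz with rfl | rfl
      · exact hy.1
      · exact hy.2)
    (by
      intro Y hY
      obtain ⟨⟨a, b⟩, hab, rfl⟩ := Finset.mem_image.1 hY
      simp only [Finset.mem_product, hA, hB, Finset.mem_sdiff, mem_nbr] at hab
      obtain ⟨⟨h1, h2⟩, h3, h4⟩ := hab
      refine ⟨Finset.card_pair fun hab : a = b => h4 (hab ▸ h1), ?_⟩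
      refine homologyDim_indepSets_pair k (x₁ := x₁) (x₂ := x₂) (by simp) (by simp) h1 h4 h2 h3 ?_
      intro x hx
      simp only [Finset.mem_insert, Finset.mem_singleton] at hx
      rcases hx with rfl | rfl
      · exact Or.inl h1
      · exact Or.inr h3)
  rw [Finset.card_image_of_injOn hinj, Finset.card_product, degG,
    ← Finset.card_inter_add_card_sdiff (nbr E x₁) (nbr E x₂)] at key
  exact Nat.le_of_add_le_add_left key

/-- Three neighborhoods of the form `U \ {u}`, with `u` ranging over three elements of `U`, violate
equality of the coarse Betti numbers. -/
lemma not_three_complements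
    (h : ∀ (X' : Finset (Fin n)) (i : ℕ), bettiCoarse k E i X' = bettiCoarse k (ferrers E) i X')
    {x₁ x₂ x₃ : Fin n} {y₁ y₂ y₃ : Fin m} {D : Finset (Fin m)} (h₁₂ : y₁ ≠ y₂) (h₁₃ : y₁ ≠ y₃)
    (h₂₃ : y₂ ≠ y₃) (hy₁ : y₁ ∉ D) (hy₂ : y₂ ∉ D) (hy₃ : y₃ ∉ D)
    (hx₁ : nbr E x₁ = insert y₂ (insert y₃ D)) (hx₂ : nbr E x₂ = insert y₁ (insert y₃ D))
    (hx₃ : nbr E x₃ = insert y₁ (insert y₂ D)) : False := by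
  have e₁ : ∀ y, (x₁, y) ∈ E ↔ y = y₂ ∨ y = y₃ ∨ y ∈ D := fun y => by
    rw [← mem_nbr, hx₁, Finset.mem_insert, Finset.mem_insert]
  have e₂ : ∀ y, (x₂, y) ∈ E ↔ y = y₁ ∨ y = y₃ ∨ y ∈ D := fun y => by
    rw [← mem_nbr, hx₂, Finset.mem_insert, Finset.mem_insert]
  have e₃ : ∀ y, (x₃, y) ∈ E ↔ y = y₁ ∨ y = y₂ ∨ y ∈ D := fun y => by
    rw [← mem_nbr, hx₃, Finset.mem_insert, Finset.mem_insert]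
  have key := card_add_card_le_degG h (X := {x₁, x₂, x₃}) (x := x₁) (by simp) (D := D)
    (P := {{y₁, y₂}, {y₁, y₃}, {y₂, y₃}})
    (by
      intro y hy z hz
      simp only [Finset.mem_insert, Finset.mem_singleton] at hz
      rcases hz with rfl | rfl | rfl
      · simp [e₁, hy]
      · simp [e₂, hy]
      · simp [e₃, hy])
    (by
      intro Y hY
      simp only [Finset.mem_insert, Finset.mem_singleton] at hY
      rcases hY with rfl | rfl | rfl
      · refine ⟨Finset.card_pair h₁₂,
          homologyDim_indepSets_pair k (x₁ := x₂) (x₂ := x₁) ?_ ?_ ?_ ?_ ?_ ?_ ?_⟩ <;> grind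
      · refine ⟨Finset.card_pair h₁₃,
          homologyDim_indepSets_pair k (x₁ := x₃) (x₂ := x₁) ?_ ?_ ?_ ?_ ?_ ?_ ?_⟩ <;> grind
      · refine ⟨Finset.card_pair h₂₃,
          homologyDim_indepSets_pair k (x₁ := x₃) (x₂ := x₂) ?_ ?_ ?_ ?_ ?_ ?_ ?_⟩ <;> grind)
  have hn : ∀ {a b c : Fin m}, a ∉ ({b, c} : Finset (Fin m)) → ∀ d,
      ({a, d} : Finset (Fin m)) ≠ {b, c} := fun ha d he => ha (he ▸ Finset.mem_insert_self _ _)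
  have hP : ({{y₁, y₂}, {y₁, y₃}, {y₂, y₃}} : Finset (Finset (Fin m))).card = 3 := by
    refine Finset.card_eq_three.2 ⟨_, _, _, ?_, ?_, ?_, rfl⟩
    · rw [Finset.pair_comm y₁ y₂]
      exact hn (by simp [h₁₂.symm, h₂₃]) _
    · exact hn (by simp [h₁₂, h₁₃]) _
    · exact hn (by simp [h₁₂, h₁₃]) _
  rw [hP, degG, hx₁, Finset.card_insert_of_notMem (by simp [h₂₃, hy₂]),
    Finset.card_insert_of_notMem hy₃] at key
  omega

lemma nearlyRowNested_of_bettiCoarse_eq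
    (h : ∀ (X' : Finset (Fin n)) (i : ℕ), bettiCoarse k E i X' = bettiCoarse k (ferrers E) i X') :
    NearlyRowNested E := by
  have hsd : ∀ x₁ x₂, ¬ nbr E x₁ ⊆ nbr E x₂ → (nbr E x₂ \ nbr E x₁).card ≤ 1 := by
    intro x₁ x₂ hsub
    refine Nat.le_of_mul_le_mul_left
      ((card_sdiff_mul_card_sdiff_le h x₁ x₂).trans_eq (mul_one _).symm) ?_
    rw [Finset.card_pos, Finset.sdiff_nonempty]
    exact hsub
  have hsymm : ∀ x₁ x₂, (nbr E x₁ \ nbr E x₂).card + (nbr E x₂).card =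
      (nbr E x₂ \ nbr E x₁).card + (nbr E x₁).card := fun x₁ x₂ => by
    rw [Finset.card_sdiff_add_card, Finset.card_sdiff_add_card, Finset.union_comm]
  constructor
  · intro x₁ x₂ hlt
    refine Finset.ssubset_iff_subset_ne.2 ⟨?_, fun he => hlt.ne (by rw [he])⟩
    by_contra hsub
    have h1 := hsd x₁ x₂ hsub
    have h2 := hsymm x₁ x₂
    have h3 := Finset.card_pos.2 (Finset.sdiff_nonempty.2 hsub)
    omega
  · rintro c ⟨x₀, hx₀⟩
    by_cases hall : ∀ x, (nbr E x).card = c → nbr E x₀ ⊆ nbr E x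
    · refine (Nat.sub_le c 1).trans ?_
      rw [← hx₀]
      exact Finset.card_le_card fun y hy => Finset.mem_filter.2
        ⟨Finset.mem_univ y, fun x hx => hall x (hx.trans hx₀) hy⟩
    push Not at hall
    obtain ⟨x₁, hx₁, hsub⟩ := hall
    have hB := hsd x₀ x₁ hsub
    have hA := Finset.card_pos.2 (Finset.sdiff_nonempty.2 hsub)
    have hs := hsymm x₀ x₁
    obtain ⟨p, hp⟩ := Finset.card_eq_one.1 (show (nbr E x₀ \ nbr E x₁).card = 1 by omega)
    obtain ⟨q, hq⟩ := Finset.card_eq_one.1 (show (nbr E x₁ \ nbr E x₀).card = 1 by omega)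
    have hDcard : (nbr E x₀ ∩ nbr E x₁).card = c - 1 := by
      have := Finset.card_inter_add_card_sdiff (nbr E x₀) (nbr E x₁)
      rw [hp, Finset.card_singleton] at this
      omega
    rw [← hDcard]
    refine Finset.card_le_card fun u hu => Finset.mem_filter.2 ⟨Finset.mem_univ u, fun x hx => ?_⟩
    by_contra hux
    have hp' : ∀ y, (y ∈ nbr E x₀ ∧ y ∉ nbr E x₁) ↔ y = p := fun y => by
      rw [← Finset.mem_sdiff, hp, Finset.mem_singleton]
    have hq' : ∀ y, (y ∈ nbr E x₁ ∧ y ∉ nbr E x₀) ↔ y = q := fun y => by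
      rw [← Finset.mem_sdiff, hq, Finset.mem_singleton]
    rw [Finset.mem_inter] at hu
    -- both `N(x₀)` and `N(x₁)` exceed `N(x)` exactly by the vertex `u`
    have hmiss : ∀ z, (nbr E z).card = c → u ∈ nbr E z → ∀ y ∈ nbr E z, y ≠ u → y ∈ nbr E x := by
      intro z hz huz y hy hyu
      by_contra hyx
      have h1 : (nbr E z \ nbr E x).card ≤ 1 := by
        have hs := hsymm x z
        by_cases hxz : nbr E x ⊆ nbr E z
        · rw [Finset.sdiff_eq_empty_iff_subset.2 hxz, Finset.card_empty] at hs
          omega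
        · exact hsd x z hxz
      exact hyu (Finset.card_le_one.1 h1 y (Finset.mem_sdiff.2 ⟨hy, hyx⟩) u
        (Finset.mem_sdiff.2 ⟨huz, hux⟩))
    have h0 := hmiss x₀ hx₀ hu.1
    have h1 := hmiss x₁ hx₁ hu.2
    have hp1 := (hp' p).2 rfl
    have hq1 := (hq' q).2 rfl
    have hpu : p ≠ u := fun he => hp1.2 (he ▸ hu.2)
    have hqu : q ≠ u := fun he => hq1.2 (he ▸ hu.1)
    have hpq : p ≠ q := fun he => hp1.2 (he ▸ hq1.1)
    set D := (nbr E x₀ ∩ nbr E x₁).erase u with hD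
    have hDx : ∀ y, y ∈ D ↔ y ≠ u ∧ y ∈ nbr E x₀ ∧ y ∈ nbr E x₁ := fun y => by
      rw [hD, Finset.mem_erase, Finset.mem_inter]
    have hpD : p ∉ D := fun hm => hp1.2 ((hDx p).1 hm).2.2
    have hqD : q ∉ D := fun hm => hq1.2 ((hDx q).1 hm).2.1
    have huD : u ∉ D := fun hm => ((hDx u).1 hm).1 rfl
    have hx₀' : nbr E x₀ = insert p (insert u D) := by
      ext y
      simp only [Finset.mem_insert, hDx, ← hp']
      by_cases hyu : y = u
      · simp [hyu, hu.1]
      · simp only [hyu]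
        tauto
    have hx₁' : nbr E x₁ = insert q (insert u D) := by
      ext y
      simp only [Finset.mem_insert, hDx, ← hq']
      by_cases hyu : y = u
      · simp [hyu, hu.2]
      · simp only [hyu]
        tauto
    refine not_three_complements h (x₁ := x₀) (x₂ := x₁) (x₃ := x) (y₁ := q) (y₂ := p) (y₃ := u)
      hpq.symm hqu hpu hqD hpD huD hx₀' hx₁' ?_
    symm
    refine Finset.eq_of_subset_of_card_le ?_ ?_
    · intro y hy
      simp only [Finset.mem_insert] at hy
      rcases hy with rfl | rfl | hy
      · exact h1 _ hq1.1 hqu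
      · exact h0 _ hp1.1 hpu
      · exact h0 y ((hDx y).1 hy).2.1 ((hDx y).1 hy).1
    · rw [hx, ← hx₀, hx₀', Finset.card_insert_of_notMem (by simp [hpu, hpD]),
        Finset.card_insert_of_notMem huD, Finset.card_insert_of_notMem (by simp [hpq.symm, hqD]),
        Finset.card_insert_of_notMem hpD]

end Converse

/-- **Theorem (Nagel–Reiner, Proposition 4.18).**  For a bipartite graph `G`
on `X ⊔ Y` with edge ideal `I` and associated Ferrers ideal `J`:
`β_{i,X',•}(I) = β_{i,X',•}(J)` holds for all `X' ⊆ X` and all `i ≥ 0` if and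
only if `G` is nearly row-nested. -/
theorem betti_eq_ferrers_iff_nearlyRowNested (k : Type*) [Field k] (n m : ℕ)
    (E : Finset (Fin n × Fin m)) :
    (∀ (X' : Finset (Fin n)) (i : ℕ),
        bettiCoarse k E i X' = bettiCoarse k (ferrers E) i X') ↔
      NearlyRowNested E := by
  refine ⟨nearlyRowNested_of_bettiCoarse_eq, fun h X i => ?_⟩
  rcases X.eq_empty_or_nonempty with rfl | hX
  · rw [bettiCoarse_empty, bettiCoarse_empty]
  · obtain ⟨x₀, hx₀, hmin⟩ := Finset.exists_min_image X (degG E) hX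
    rw [bettiCoarse_of_nearlyRowNested k h hx₀ hmin,
      bettiCoarse_of_nearlyRowNested k (nearlyRowNested_ferrers E) hx₀
        (by simpa only [degG_ferrers] using hmin), degG_ferrers]
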